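/- arXiv:1002.3566 — 2 statements merged into one kernel-verified Lean document; each statement's English description precedes it below -/
import Mathlib

section
/- Let H be the completion of C_c^∞(R^N) under the norm (∫ (|∇v|^2 + v^2) e^{-|x|^2/4} dx)^{1/2} and L the completion under (∫ v^2 e^{-|x|^2/4} dx)^{1/2}. Then the embedding H ↪ L is compact: every sequence bounded in H has a subsequence converging strongly in L. -/
open MeasureTheory Real Set

noncomputable section

lemma cs_dil {N : ℕ} (f : EuclideanSpace ℝ (Fin N) → ℝ) (hf : ContDiff ℝ (⊤ : ℕ∞) f)
    (hc : HasCompactSupport f) :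
    Integrable (fun x => fderiv ℝ f x x) ∧ ∫ x, fderiv ℝ f x x = - N * ∫ x, f x := by
  have hfd : Continuous (fderiv ℝ f) := hf.continuous_fderiv (by simp)
  have hcd : HasCompactSupport (fderiv ℝ f) := hc.fderiv ℝ
  let e : Fin N → EuclideanSpace ℝ (Fin N) := fun i => EuclideanSpace.single i 1
  have hsum : ∀ x, fderiv ℝ f x x = ∑ i, x i * fderiv ℝ f x (e i) := by
    intro x
    have : x = ∑ i, x i • e i := by
      ext j
      simp [e, Finset.sum_apply, Pi.single_apply]
    calc fderiv ℝ f x x = fderiv ℝ f x (∑ i, x i • e i) := congrArg _ this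
      _ = _ := by rw [map_sum]; simp
  have hint : ∀ i, Integrable (fun x : EuclideanSpace ℝ (Fin N) => x i * fderiv ℝ f x (e i)) := by
    intro i
    apply Continuous.integrable_of_hasCompactSupport
    · fun_prop
    · refine hcd.mono' ?_
      intro x hx
      apply subset_tsupport
      intro h0
      apply hx
      simp [h0]
  have hparts : ∀ i, ∫ x : EuclideanSpace ℝ (Fin N), x i * fderiv ℝ f x (e i) = - ∫ x, f x := by
    intro i
    have hp : ∀ x, fderiv ℝ (fun x : EuclideanSpace ℝ (Fin N) => x i) x
        = EuclideanSpace.proj (𝕜 := ℝ) i := by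
      intro x
      exact (EuclideanSpace.proj i : EuclideanSpace ℝ (Fin N) →L[ℝ] ℝ).hasFDerivAt.fderiv
    have hp1 : ∀ x, fderiv ℝ (fun x : EuclideanSpace ℝ (Fin N) => x i) x (e i) = 1 := by
      intro x
      rw [hp]; simp [e]
    have := integral_mul_fderiv_eq_neg_fderiv_mul_of_integrable (μ := volume)
      (f := fun x : EuclideanSpace ℝ (Fin N) => x i) (g := f) (v := e i) ?_ (hint i) ?_ ?_ ?_
    · rw [this]
      simp [hp1]
    · simp only [hp1, one_mul]
      exact hf.continuous.integrable_of_hasCompactSupport hc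
    · apply Continuous.integrable_of_hasCompactSupport
      · have := hf.continuous
        fun_prop
      · exact hc.mul_left
    · intro x _; fun_prop
    · intro x _; exact (hf.differentiable (by simp)) x
  constructor
  · simp only [hsum]
    exact integrable_finsetSum _ fun i _ => hint i
  · simp only [hsum]
    rw [integral_finsetSum _ fun i _ => hint i]
    simp [hparts]

lemma cs_energy {N : ℕ} (u : EuclideanSpace ℝ (Fin N) → ℝ) (hu : ContDiff ℝ (⊤ : ℕ∞) u)
    (hc : HasCompactSupport u) (M : ℝ)
    (hM : ∫ x, (‖gradient u x‖ ^ 2 + (u x) ^ 2) * Real.exp (-‖x‖ ^ 2 / 4) ≤ M)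
    (v : EuclideanSpace ℝ (Fin N) → ℝ) (hv : v = fun x => u x * Real.exp (-‖x‖ ^ 2 / 8)) :
    ContDiff ℝ (⊤ : ℕ∞) v ∧ HasCompactSupport v ∧ ∫ x, v x ^ 2 ≤ M ∧
      ∫ x, ‖fderiv ℝ v x‖ ^ 2 ≤ (1 + N / 4) * M ∧
      ∫ x, ‖x‖ ^ 2 * v x ^ 2 ≤ 16 * ((1 + N / 4) * M) := by
  have hg : ContDiff ℝ (⊤ : ℕ∞) (fun x : EuclideanSpace ℝ (Fin N) => Real.exp (-‖x‖ ^ 2 / 8)) := by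
    have : ContDiff ℝ (⊤ : ℕ∞) (fun x : EuclideanSpace ℝ (Fin N) => ‖x‖ ^ 2) := contDiff_norm_sq ℝ
    exact ((this.neg).div_const 8).exp
  have hvs : ContDiff ℝ (⊤ : ℕ∞) v := by rw [hv]; exact hu.mul hg
  have hvc : HasCompactSupport v := by rw [hv]; exact hc.mul_right
  have hgd : ∀ x : EuclideanSpace ℝ (Fin N), HasFDerivAt
      (fun x : EuclideanSpace ℝ (Fin N) => Real.exp (-‖x‖ ^ 2 / 8))
      (-(Real.exp (-‖x‖ ^ 2 / 8) / 4) • innerSL ℝ x) x := by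
    intro x
    have h1 := (hasStrictFDerivAt_norm_sq x).hasFDerivAt
    have h2 := ((h1.neg).mul_const (1/8 : ℝ)).exp
    refine (h2.congr_fderiv ?_).congr_of_eventuallyEq (Filter.Eventually.of_forall fun y => ?_)
    · ext y; simp [div_eq_mul_inv]; ring
    · simp [div_eq_mul_inv]
  have hud : Differentiable ℝ u := hu.differentiable (by simp)
  have hvd : ∀ x, HasFDerivAt v (u x • (-(Real.exp (-‖x‖ ^ 2 / 8) / 4) • innerSL ℝ x)
      + Real.exp (-‖x‖ ^ 2 / 8) • fderiv ℝ u x) x := by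
    intro x; rw [hv]; exact (hud x).hasFDerivAt.mul (hgd x)
  have hgu : ∀ x, HasFDerivAt u (innerSL ℝ (gradient u x)) x := fun x =>
    (hud x).hasGradientAt.hasFDerivAt
  have hsq : ∀ x : EuclideanSpace ℝ (Fin N),
      Real.exp (-‖x‖ ^ 2 / 8) ^ 2 = Real.exp (-‖x‖ ^ 2 / 4) := by
    intro x; rw [← Real.exp_nat_mul]; congr 1; push_cast; ring
  have hnv : ∀ x, ‖fderiv ℝ v x‖ =
      ‖Real.exp (-‖x‖ ^ 2 / 8) • gradient u x - (v x / 4) • x‖ := by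
    intro x
    rw [(hvd x).fderiv, (hgu x).fderiv, ← innerSL_apply_norm (𝕜 := ℝ)
      (x := Real.exp (-‖x‖ ^ 2 / 8) • gradient u x - (v x / 4) • x)]
    congr 1
    ext y
    simp [hv, inner_sub_left, inner_smul_left]
    ring
  have hd : ∀ x, fderiv ℝ (fun x => v x ^ 2) x x =
      2 * v x * inner ℝ (Real.exp (-‖x‖ ^ 2 / 8) • gradient u x - (v x / 4) • x) x := by
    intro x
    rw [((hvd x).pow 2).fderiv, (hgu x).fderiv]
    simp [hv, inner_sub_left, inner_smul_left]
    ring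
  have key : ∀ x, ‖fderiv ℝ v x‖ ^ 2 + ‖x‖ ^ 2 * v x ^ 2 / 16
      = ‖gradient u x‖ ^ 2 * Real.exp (-‖x‖ ^ 2 / 4) - (1/4) * fderiv ℝ (fun x => v x ^ 2) x x := by
    intro x
    rw [hd, hnv, @norm_sub_sq_real, inner_sub_left, inner_smul_left, inner_smul_left,
      inner_smul_left, inner_smul_right, norm_smul, norm_smul, mul_pow, mul_pow,
      real_inner_self_eq_norm_sq]
    simp only [Real.norm_eq_abs, sq_abs, hsq]
    simp
    ring
  obtain ⟨i1, e1⟩ := cs_dil (fun x => v x ^ 2) (hvs.pow 2) (by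
    simp only [pow_two]; exact hvc.mul_right)
  have hcv := hvs.continuous
  have hcu := hu.continuous
  have hcfv : Continuous (fderiv ℝ v) := hvs.continuous_fderiv (by simp)
  have hcgu : Continuous (gradient u) :=
    (InnerProductSpace.toDual ℝ _).symm.continuous.comp (hu.continuous_fderiv (by simp))
  have hsg : HasCompactSupport (gradient u) :=
    (hc.fderiv ℝ).comp_left (g := (InnerProductSpace.toDual ℝ _).symm) (by simp)
  have i2 : Integrable (fun x => v x ^ 2) := by
    apply Continuous.integrable_of_hasCompactSupport (by fun_prop)
    simp only [pow_two]; exact hvc.mul_right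
  have i3 : Integrable (fun x => ‖x‖ ^ 2 * v x ^ 2) := by
    apply Continuous.integrable_of_hasCompactSupport (by fun_prop)
    simp only [pow_two]; exact (hvc.mul_right).mul_left
  have i4 : Integrable (fun x => ‖fderiv ℝ v x‖ ^ 2) := by
    apply Continuous.integrable_of_hasCompactSupport (by fun_prop)
    simp only [pow_two]; exact ((hvc.fderiv ℝ).norm.mul_right)
  have i5 : Integrable (fun x => ‖gradient u x‖ ^ 2 * Real.exp (-‖x‖ ^ 2 / 4)) := by
    apply Continuous.integrable_of_hasCompactSupport (by fun_prop)
    simp only [pow_two]; exact (hsg.norm.mul_right).mul_right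
  have hM' : (∫ x, ‖gradient u x‖ ^ 2 * Real.exp (-‖x‖ ^ 2 / 4)) + ∫ x, v x ^ 2 ≤ M := by
    rw [← integral_add i5 i2]
    refine le_of_eq_of_le ?_ hM
    congr 1; ext x
    simp only [hv, mul_pow, hsq]; ring
  have hI := integral_congr_ae (μ := volume) (Filter.Eventually.of_forall key)
  rw [integral_add i4 (i3.div_const 16), integral_sub i5 (i1.const_mul _), integral_div,
    integral_const_mul, e1] at hI
  have p2 : 0 ≤ ∫ x, v x ^ 2 := integral_nonneg fun x => by positivity
  have p3 : 0 ≤ ∫ x, ‖x‖ ^ 2 * v x ^ 2 := integral_nonneg fun x => by positivity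
  have p4 : 0 ≤ ∫ x, ‖fderiv ℝ v x‖ ^ 2 := integral_nonneg fun x => by positivity
  have p5 : 0 ≤ ∫ x, ‖gradient u x‖ ^ 2 * Real.exp (-‖x‖ ^ 2 / 4) :=
    integral_nonneg fun x => by positivity
  have hNn : (0:ℝ) ≤ N := Nat.cast_nonneg N
  have h2M : ∫ x, v x ^ 2 ≤ M := by linarith
  have hNM := mul_le_mul_of_nonneg_left h2M hNn
  exact ⟨hvs, hvc, h2M, by linarith, by linarith⟩
lemma cs_weak {N : ℕ} (v : ℕ → EuclideanSpace ℝ (Fin N) → ℝ) (C : ℝ)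
    (hv : ∀ n, MemLp (v n) 2 volume) (hC : ∀ n, ∫ x, v n x ^ 2 ≤ C) :
    ∃ φ : ℕ → ℕ, StrictMono φ ∧ ∀ s : Set (EuclideanSpace ℝ (Fin N)), MeasurableSet s →
      volume s ≠ ⊤ → ∃ l, Filter.Tendsto (fun n => ∫ x in s, v (φ n) x) Filter.atTop (nhds l) := by
  let F : ℕ → Lp ℝ 2 (volume : Measure (EuclideanSpace ℝ (Fin N))) := fun n => (hv n).toLp (v n)
  have hF : ∀ n, ‖F n‖ ≤ Real.sqrt C := by
    intro n
    apply Real.le_sqrt_of_sq_le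
    rw [← real_inner_self_eq_norm_sq, L2.inner_def]
    refine le_of_eq_of_le ?_ (hC n)
    apply integral_congr_ae
    filter_upwards [(hv n).coeFn_toLp] with x hx
    simp [F, hx, pow_two]
  have : Fact ((2 : ENNReal) ≠ ⊤) := ⟨by simp⟩
  have : TopologicalSpace.SeparableSpace (Lp ℝ 2 (volume : Measure (EuclideanSpace ℝ (Fin N)))) :=
    inferInstance
  have hs := WeakDual.isSeqCompact_closedBall ℝ
    (Lp ℝ 2 (volume : Measure (EuclideanSpace ℝ (Fin N)))) 0 (Real.sqrt C)
  obtain ⟨a, -, φ, hφ, ht⟩ := hs (x := fun n => StrongDual.toWeakDual (innerSL ℝ (F n))) (by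
    intro n
    simpa using hF n)
  refine ⟨φ, hφ, fun s hms hsf => ?_⟩
  let g := indicatorConstLp 2 hms hsf (1:ℝ)
  have h1 := ((WeakDual.eval_continuous g).tendsto a).comp ht
  refine ⟨a g, h1.congr fun n => ?_⟩
  change inner ℝ (F (φ n)) g = _
  rw [real_inner_comm, L2.inner_indicatorConstLp_one]
  apply integral_congr_ae
  exact ae_restrict_of_ae ((hv (φ n)).coeFn_toLp)

lemma cs_translate {N : ℕ} (v : EuclideanSpace ℝ (Fin N) → ℝ) (hv : ContDiff ℝ (⊤ : ℕ∞) v)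
    (h : EuclideanSpace ℝ (Fin N)) :
    ∫⁻ x, ENNReal.ofReal ((v x - v (x + h)) ^ 2) ≤
      ENNReal.ofReal (‖h‖ ^ 2) * ∫⁻ x, ENNReal.ofReal (‖fderiv ℝ v x‖ ^ 2) := by
  have hd : Continuous (fderiv ℝ v) := hv.continuous_fderiv (by simp)
  have hp : ∀ x, ENNReal.ofReal ((v x - v (x + h)) ^ 2) ≤
      ∫⁻ t in Ioc (0:ℝ) 1, ENNReal.ofReal (‖h‖ ^ 2) * ENNReal.ofReal (‖fderiv ℝ v (x + t • h)‖ ^ 2) := by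
    intro x
    have hder : ∀ t : ℝ, HasDerivAt (fun t : ℝ => v (x + t • h)) (fderiv ℝ v (x + t • h) h) t := by
      intro t
      have h1 : HasDerivAt (fun t : ℝ => x + t • h) h t := by
        simpa using ((hasDerivAt_id t).smul_const h).const_add x
      exact ((hv.differentiable (by simp)) (x + t • h)).hasFDerivAt.comp_hasDerivAt t h1
    have hcont : Continuous fun t : ℝ => fderiv ℝ v (x + t • h) h := by fun_prop
    have hftc := intervalIntegral.integral_eq_sub_of_hasDerivAt (a := 0) (b := 1)
      (fun t _ => hder t) (hcont.intervalIntegrable _ _)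
    rw [intervalIntegral.integral_of_le zero_le_one] at hftc
    simp only [one_smul, zero_smul, add_zero] at hftc
    have : IsProbabilityMeasure (volume.restrict (Ioc (0:ℝ) 1)) := ⟨by simp⟩
    have hi : ∀ g : ℝ → ℝ, Continuous g → Integrable g (volume.restrict (Ioc (0:ℝ) 1)) :=
      fun g hg => (hg.integrableOn_Icc (a := 0) (b := 1)).mono_set Ioc_subset_Icc_self
    have hj := (even_two.convexOn_pow (𝕜 := ℝ)).map_integral_le (μ := volume.restrict (Ioc (0:ℝ) 1))
      (f := fun t : ℝ => fderiv ℝ v (x + t • h) h) (by fun_prop) isClosed_univ (by simp)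
      (hi _ hcont) (hi _ (by simp only [Function.comp_def]; fun_prop))
    rw [hftc] at hj
    calc ENNReal.ofReal ((v x - v (x + h)) ^ 2)
        = ENNReal.ofReal ((v (x + h) - v x) ^ 2) := by congr 1; ring
      _ ≤ ENNReal.ofReal (∫ t in Ioc (0:ℝ) 1, (fderiv ℝ v (x + t • h) h) ^ 2) :=
          ENNReal.ofReal_le_ofReal hj
      _ = ∫⁻ t in Ioc (0:ℝ) 1, ENNReal.ofReal ((fderiv ℝ v (x + t • h) h) ^ 2) :=
          ofReal_integral_eq_lintegral_ofReal (hi _ (by fun_prop))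
            (Filter.Eventually.of_forall fun t => by positivity)
      _ ≤ _ := by
          apply lintegral_mono
          intro t
          simp only []
          rw [← ENNReal.ofReal_mul (by positivity)]
          apply ENNReal.ofReal_le_ofReal
          rw [← sq_abs, ← Real.norm_eq_abs, ← mul_pow]
          apply pow_le_pow_left₀ (norm_nonneg _)
          rw [mul_comm]
          exact ContinuousLinearMap.le_opNorm _ _
  calc _ ≤ ∫⁻ x, ∫⁻ t in Ioc (0:ℝ) 1,
        ENNReal.ofReal (‖h‖ ^ 2) * ENNReal.ofReal (‖fderiv ℝ v (x + t • h)‖ ^ 2) :=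
        lintegral_mono hp
    _ = ∫⁻ t in Ioc (0:ℝ) 1, ∫⁻ x,
        ENNReal.ofReal (‖h‖ ^ 2) * ENNReal.ofReal (‖fderiv ℝ v (x + t • h)‖ ^ 2) := by
        apply lintegral_lintegral_swap
        apply Measurable.aemeasurable
        apply Continuous.measurable
        simp only [Function.uncurry_def]
        refine ENNReal.continuous_const_mul (by simp) |>.comp (ENNReal.continuous_ofReal.comp ?_)
        fun_prop
    _ = ∫⁻ t in Ioc (0:ℝ) 1,
        ENNReal.ofReal (‖h‖ ^ 2) * ∫⁻ x, ENNReal.ofReal (‖fderiv ℝ v x‖ ^ 2) := by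
        congr 1; ext t
        rw [lintegral_const_mul' _ _ (by simp)]
        congr 1
        exact lintegral_add_right_eq_self (fun x => ENNReal.ofReal (‖fderiv ℝ v x‖ ^ 2)) (t • h)
    _ = _ := by simp


lemma cs_jensen {α : Type*} [MeasurableSpace α] (μ : Measure α) [IsProbabilityMeasure μ]
    (f : α → ℝ) (hf : Integrable f μ) (hf2 : Integrable (fun x => f x ^ 2) μ) :
    (∫ x, f x ∂μ) ^ 2 ≤ ∫ x, f x ^ 2 ∂μ :=
  (even_two.convexOn_pow (𝕜 := ℝ)).map_integral_le (μ := μ) (f := f) (by fun_prop)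
    isClosed_univ (by simp) hf hf2

/-- The uniform probability measure on the ball of radius `δ`. -/
def csMu (N : ℕ) (δ : ℝ) : Measure (EuclideanSpace ℝ (Fin N)) :=
  (volume (Metric.ball (0 : EuclideanSpace ℝ (Fin N)) δ))⁻¹ •
    volume.restrict (Metric.ball (0 : EuclideanSpace ℝ (Fin N)) δ)

lemma csMu_prob (N : ℕ) {δ : ℝ} (hδ : 0 < δ) : IsProbabilityMeasure (csMu N δ) := by
  constructor
  simp only [csMu, Measure.smul_apply, Measure.restrict_apply_univ, smul_eq_mul]
  exact ENNReal.inv_mul_cancel (Metric.measure_ball_pos volume _ hδ).ne' measure_ball_lt_top.ne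

lemma csMu_integrable {N : ℕ} {δ : ℝ} (hδ : 0 < δ) (g : EuclideanSpace ℝ (Fin N) → ℝ)
    (hg : Continuous g) : Integrable g (csMu N δ) := by
  have h1 : IntegrableOn g (Metric.closedBall (0 : EuclideanSpace ℝ (Fin N)) δ) :=
    hg.continuousOn.integrableOn_compact (isCompact_closedBall _ _)
  exact Integrable.smul_measure (h1.mono_set Metric.ball_subset_closedBall)
    (ENNReal.inv_ne_top.2 (Metric.measure_ball_pos volume _ hδ).ne')

lemma csMu_integral {N : ℕ} (δ : ℝ) (g : EuclideanSpace ℝ (Fin N) → ℝ)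
    (x : EuclideanSpace ℝ (Fin N)) :
    ∫ h, g (x + h) ∂(csMu N δ) =
      ((volume (Metric.ball (0 : EuclideanSpace ℝ (Fin N)) δ))⁻¹).toReal *
        ∫ y in Metric.ball x δ, g y := by
  rw [csMu, integral_smul_measure, smul_eq_mul]
  congr 1
  have := (measurePreserving_add_left volume x).setIntegral_preimage_emb
    (measurableEmbedding_addLeft x) g (Metric.ball x δ)
  rw [← this]
  congr 2
  ext y
  simp

lemma cs_approx {N : ℕ} (w : EuclideanSpace ℝ (Fin N) → ℝ) (hw : ContDiff ℝ (⊤ : ℕ∞) w)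
    {δ : ℝ} (hδ : 0 < δ) :
    ∫⁻ x, ENNReal.ofReal ((w x - ∫ h, w (x + h) ∂(csMu N δ)) ^ 2) ≤
      ENNReal.ofReal (δ ^ 2) * ∫⁻ x, ENNReal.ofReal (‖fderiv ℝ w x‖ ^ 2) := by
  have := csMu_prob N hδ
  have hc := hw.continuous
  calc _ ≤ ∫⁻ x, ∫⁻ h, ENNReal.ofReal ((w x - w (x + h)) ^ 2) ∂(csMu N δ) := by
        apply lintegral_mono
        intro x
        have h1 : w x - ∫ h, w (x + h) ∂(csMu N δ) = ∫ h, (w x - w (x + h)) ∂(csMu N δ) := by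
          rw [integral_sub (integrable_const _) (csMu_integrable hδ _ (by fun_prop))]
          simp
        have i2 := csMu_integrable hδ (fun h => (w x - w (x + h)) ^ 2) (by fun_prop)
        simp only []
        rw [h1, ← ofReal_integral_eq_lintegral_ofReal i2
          (Filter.Eventually.of_forall fun t => by positivity)]
        exact ENNReal.ofReal_le_ofReal
          (cs_jensen _ _ (csMu_integrable hδ _ (by fun_prop)) i2)
    _ = ∫⁻ h, (∫⁻ x, ENNReal.ofReal ((w x - w (x + h)) ^ 2)) ∂(csMu N δ) := by
        apply lintegral_lintegral_swap
        apply Measurable.aemeasurable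
        apply Continuous.measurable
        simp only [Function.uncurry_def]
        exact ENNReal.continuous_ofReal.comp (by fun_prop)
    _ ≤ ∫⁻ _h, (ENNReal.ofReal (δ ^ 2) *
          ∫⁻ x, ENNReal.ofReal (‖fderiv ℝ w x‖ ^ 2)) ∂(csMu N δ) := by
        apply lintegral_mono_ae
        have hae : ∀ᵐ h ∂(csMu N δ), h ∈ Metric.ball (0 : EuclideanSpace ℝ (Fin N)) δ :=
          Measure.ae_smul_measure (ae_restrict_mem measurableSet_ball) _
        filter_upwards [hae] with h hh
        refine (cs_translate w hw h).trans ?_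
        gcongr
        simpa using (mem_ball_zero_iff.1 hh).le
    _ = _ := by simp

lemma cs_sqint {N : ℕ} (f : EuclideanSpace ℝ (Fin N) → ℝ) (C : ℝ) (a b : EuclideanSpace ℝ (Fin N) → ℝ)
    (ha : Integrable a) (hb : Integrable b) (haC : ∫ x, a x ≤ C) (hbC : ∫ x, b x ≤ C)
    (h0 : ∀ x, 0 ≤ f x) (h : ∀ x, f x ≤ 2 * a x + 2 * b x) :
    ∫⁻ x, ENNReal.ofReal (f x) ≤ ENNReal.ofReal (4 * C) := by
  have hi : Integrable (fun x => 2 * a x + 2 * b x) := (ha.const_mul 2).add (hb.const_mul 2)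
  calc _ ≤ ∫⁻ x, ENNReal.ofReal (2 * a x + 2 * b x) :=
        lintegral_mono fun x => ENNReal.ofReal_le_ofReal (h x)
    _ = ENNReal.ofReal (∫ x, (2 * a x + 2 * b x)) :=
        (ofReal_integral_eq_lintegral_ofReal hi
          (Filter.Eventually.of_forall fun x => (h0 x).trans (h x))).symm
    _ ≤ _ := by
        apply ENNReal.ofReal_le_ofReal
        rw [integral_add (ha.const_mul 2) (hb.const_mul 2), integral_const_mul, integral_const_mul]
        linarith

lemma cs_compact {N : ℕ} (v : ℕ → EuclideanSpace ℝ (Fin N) → ℝ) (C : ℝ) (hC : 1 ≤ C)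
    (hs : ∀ n, ContDiff ℝ (⊤ : ℕ∞) (v n)) (hc : ∀ n, HasCompactSupport (v n))
    (h0 : ∀ n, ∫ x, v n x ^ 2 ≤ C) (h1 : ∀ n, ∫ x, ‖fderiv ℝ (v n) x‖ ^ 2 ≤ C)
    (h2 : ∀ n, ∫ x, ‖x‖ ^ 2 * v n x ^ 2 ≤ C) :
    ∃ φ : ℕ → ℕ, StrictMono φ ∧
      ∀ ε > (0 : ℝ), ∃ K : ℕ, ∀ m ≥ K, ∀ n ≥ K,
        ∫ x, (v (φ m) x - v (φ n) x) ^ 2 ≤ ε := by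
  have hcv := fun n => (hs n).continuous
  have hcf : ∀ n, Continuous (fderiv ℝ (v n)) := fun n => (hs n).continuous_fderiv (by simp)
  have i0 : ∀ n, Integrable (fun x => v n x ^ 2) := by
    intro n
    apply Continuous.integrable_of_hasCompactSupport (by have := hcv n; fun_prop)
    simp only [pow_two]; exact (hc n).mul_right
  have i1 : ∀ n, Integrable (fun x => ‖fderiv ℝ (v n) x‖ ^ 2) := by
    intro n
    apply Continuous.integrable_of_hasCompactSupport (by have := hcf n; fun_prop)
    simp only [pow_two]; exact (((hc n).fderiv ℝ).norm.mul_right)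
  have i2 : ∀ n, Integrable (fun x => ‖x‖ ^ 2 * v n x ^ 2) := by
    intro n
    apply Continuous.integrable_of_hasCompactSupport (by have := hcv n; fun_prop)
    simp only [pow_two]; exact ((hc n).mul_right).mul_left
  obtain ⟨φ, hφ, hlim⟩ := cs_weak v C
    (fun n => (hcv n).memLp_of_hasCompactSupport (hc n)) h0
  refine ⟨φ, hφ, fun ε hε => ?_⟩
  let w : ℕ × ℕ → EuclideanSpace ℝ (Fin N) → ℝ := fun p x => v (φ p.1) x - v (φ p.2) x
  have hws : ∀ p, ContDiff ℝ (⊤ : ℕ∞) (w p) := fun p => (hs _).sub (hs _)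
  have hwc : ∀ p, Continuous (w p) := fun p => (hws p).continuous
  have hw0 : ∀ p, ∫⁻ x, ENNReal.ofReal (w p x ^ 2) ≤ ENNReal.ofReal (4 * C) := by
    intro p
    refine cs_sqint _ C _ _ (i0 (φ p.1)) (i0 (φ p.2)) (h0 _) (h0 _) (fun x => by positivity) ?_
    intro x
    simp only [w]
    nlinarith [sq_nonneg (v (φ p.1) x + v (φ p.2) x)]
  have hw1 : ∀ p, ∫⁻ x, ENNReal.ofReal (‖fderiv ℝ (w p) x‖ ^ 2) ≤ ENNReal.ofReal (4 * C) := by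
    intro p
    refine cs_sqint _ C _ _ (i1 (φ p.1)) (i1 (φ p.2)) (h1 _) (h1 _) (fun x => by positivity) ?_
    intro x
    have hd : fderiv ℝ (w p) x = fderiv ℝ (v (φ p.1)) x - fderiv ℝ (v (φ p.2)) x :=
      fderiv_sub ((hs _).differentiable (by simp) x) ((hs _).differentiable (by simp) x)
    rw [hd]
    have := norm_sub_le (fderiv ℝ (v (φ p.1)) x) (fderiv ℝ (v (φ p.2)) x)
    have h3 := pow_le_pow_left₀ (norm_nonneg _) this 2
    nlinarith [sq_nonneg (‖fderiv ℝ (v (φ p.1)) x‖ - ‖fderiv ℝ (v (φ p.2)) x‖)]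
  have hw2 : ∀ p, ∫⁻ x, ENNReal.ofReal (‖x‖ ^ 2 * w p x ^ 2) ≤ ENNReal.ofReal (4 * C) := by
    intro p
    refine cs_sqint _ C _ _ (i2 (φ p.1)) (i2 (φ p.2)) (h2 _) (h2 _) (fun x => by positivity) ?_
    intro x
    have : w p x ^ 2 ≤ 2 * v (φ p.1) x ^ 2 + 2 * v (φ p.2) x ^ 2 := by
      simp only [w]
      nlinarith [sq_nonneg (v (φ p.1) x + v (φ p.2) x)]
    have := mul_le_mul_of_nonneg_left this (sq_nonneg ‖x‖)
    linarith
  -- parameters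
  have hC0 : 0 < C := by linarith
  obtain ⟨δ, hδ, hδe⟩ : ∃ δ : ℝ, 0 < δ ∧ δ ^ 2 = ε / (24 * C) :=
    ⟨Real.sqrt (ε / (24 * C)), by positivity, Real.sq_sqrt (by positivity)⟩
  obtain ⟨R, hR, hRe⟩ : ∃ R : ℝ, 0 < R ∧ R ^ 2 = 12 * C / ε :=
    ⟨Real.sqrt (12 * C / ε), by positivity, Real.sq_sqrt (by positivity)⟩
  have := csMu_prob N hδ
  let A : ℕ × ℕ → EuclideanSpace ℝ (Fin N) → ℝ := fun p x => ∫ h, w p (x + h) ∂(csMu N δ)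
  have hAm : ∀ p, Measurable (A p) := by
    intro p
    have hh : StronglyMeasurable (fun q : EuclideanSpace ℝ (Fin N) × EuclideanSpace ℝ (Fin N) =>
        w p (q.1 + q.2)) := by
      apply Continuous.stronglyMeasurable
      have := hwc p
      fun_prop
    exact hh.integral_prod_right.measurable
  set c : ℝ := ((volume (Metric.ball (0 : EuclideanSpace ℝ (Fin N)) δ))⁻¹).toReal with hcdef
  have hc0 : 0 ≤ c := ENNReal.toReal_nonneg
  have iw : ∀ p, Integrable (fun x => w p x ^ 2) := by
    intro p
    apply Continuous.integrable_of_hasCompactSupport (by have := hwc p; fun_prop)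
    simp only [pow_two]
    exact ((hc (φ p.1)).sub (hc (φ p.2))).mul_right
  have hw0r : ∀ p, ∫ x, w p x ^ 2 ≤ 4 * C := by
    intro p
    have := hw0 p
    rw [← ofReal_integral_eq_lintegral_ofReal (iw p)
      (Filter.Eventually.of_forall fun x => by positivity)] at this
    exact (ENNReal.ofReal_le_ofReal_iff (by positivity)).1 this
  have hAb : ∀ p x, A p x ^ 2 ≤ c * (4 * C) := by
    intro p x
    have hwp := hwc p
    refine (cs_jensen _ _ (csMu_integrable hδ _ (by fun_prop))
      (csMu_integrable hδ _ (by fun_prop))).trans ?_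
    rw [csMu_integral δ (fun y => w p y ^ 2) x]
    refine mul_le_mul_of_nonneg_left ?_ hc0
    refine le_trans ?_ (hw0r p)
    exact setIntegral_le_integral (iw p) (Filter.Eventually.of_forall fun x => by positivity)
  have hAl : ∀ x, Filter.Tendsto (fun p => A p x) (Filter.atTop ×ˢ Filter.atTop) (nhds 0) := by
    intro x
    obtain ⟨l, hl⟩ := hlim (Metric.ball x δ) measurableSet_ball measure_ball_lt_top.ne
    have ht := ((hl.comp (Filter.tendsto_fst (g := (Filter.atTop : Filter ℕ)))).sub
      (hl.comp (Filter.tendsto_snd (f := (Filter.atTop : Filter ℕ))))).const_mul c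
    simp only [sub_self, mul_zero] at ht
    refine ht.congr fun p => ?_
    have iv : ∀ n, IntegrableOn (v n) (Metric.ball x δ) := fun n =>
      ((hcv n).integrable_of_hasCompactSupport (hc n)).integrableOn
    simp only [A, csMu_integral, Function.comp]
    rw [integral_sub (iv _) (iv _)]
  have hT : Filter.Tendsto (fun p => ∫⁻ x in Metric.ball (0 : EuclideanSpace ℝ (Fin N)) R,
      ENNReal.ofReal (A p x ^ 2)) (Filter.atTop ×ˢ Filter.atTop) (nhds 0) := by
    have := tendsto_lintegral_filter_of_dominated_convergence
      (μ := volume.restrict (Metric.ball (0 : EuclideanSpace ℝ (Fin N)) R))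
      (l := (Filter.atTop ×ˢ Filter.atTop : Filter (ℕ × ℕ)))
      (F := fun p x => ENNReal.ofReal (A p x ^ 2)) (f := fun _ => 0)
      (fun _ => ENNReal.ofReal (c * (4 * C)))
      (Filter.Eventually.of_forall fun p => ((hAm p).pow_const 2).ennreal_ofReal)
      (Filter.Eventually.of_forall fun p => Filter.Eventually.of_forall fun x =>
        ENNReal.ofReal_le_ofReal (hAb p x))
      (by
        simp only [lintegral_const, Measure.restrict_apply_univ]
        exact ENNReal.mul_ne_top ENNReal.ofReal_ne_top measure_ball_lt_top.ne)
      (Filter.Eventually.of_forall fun x => by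
        have := ENNReal.tendsto_ofReal ((hAl x).pow 2)
        simpa using this)
    simpa using this
  have hev := hT.eventually (ge_mem_nhds (show (0 : ENNReal) < ENNReal.ofReal (ε / 6) by
    simpa using hε))
  rw [Filter.prod_atTop_atTop_eq, Filter.eventually_atTop] at hev
  obtain ⟨⟨K1, K2⟩, hK⟩ := hev
  refine ⟨max K1 K2, fun m hm n hn => ?_⟩
  have hK' := hK (m, n) ⟨(le_max_left _ _).trans hm, (le_max_right _ _).trans hn⟩
  have hfin : ∫⁻ x, ENNReal.ofReal (w (m, n) x ^ 2) ≤ ENNReal.ofReal ε := by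
    have hwp := hwc (m, n)
    have hAp := hAm (m, n)
    have hpt : ∀ x, ENNReal.ofReal (w (m, n) x ^ 2) ≤
        2 * ENNReal.ofReal ((w (m, n) x - A (m, n) x) ^ 2) +
        (2 * (Metric.ball (0 : EuclideanSpace ℝ (Fin N)) R).indicator
            (fun x => ENNReal.ofReal (A (m, n) x ^ 2)) x +
        ENNReal.ofReal ((R ^ 2)⁻¹) * ENNReal.ofReal (‖x‖ ^ 2 * w (m, n) x ^ 2)) := by
      intro x
      by_cases hx : x ∈ Metric.ball (0 : EuclideanSpace ℝ (Fin N)) R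
      · rw [indicator_of_mem hx, ← add_assoc]
        refine le_trans ?_ le_self_add
        rw [← ENNReal.ofReal_ofNat 2, ← ENNReal.ofReal_mul (by positivity),
          ← ENNReal.ofReal_mul (by positivity), ← ENNReal.ofReal_add (by positivity) (by positivity)]
        apply ENNReal.ofReal_le_ofReal
        nlinarith [sq_nonneg (w (m, n) x - 2 * A (m, n) x)]
      · refine le_trans ?_ le_add_self
        refine le_trans ?_ le_add_self
        rw [← ENNReal.ofReal_mul (by positivity)]
        apply ENNReal.ofReal_le_ofReal
        rw [← mul_assoc]
        apply le_mul_of_one_le_left (by positivity)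
        rw [inv_mul_eq_div, one_le_div (by positivity)]
        apply pow_le_pow_left₀ hR.le
        simpa using hx
    calc _ ≤ _ := lintegral_mono hpt
      _ = 2 * (∫⁻ x, ENNReal.ofReal ((w (m, n) x - A (m, n) x) ^ 2)) +
        (2 * (∫⁻ x in Metric.ball (0 : EuclideanSpace ℝ (Fin N)) R,
            ENNReal.ofReal (A (m, n) x ^ 2)) +
        ENNReal.ofReal ((R ^ 2)⁻¹) * ∫⁻ x, ENNReal.ofReal (‖x‖ ^ 2 * w (m, n) x ^ 2)) := by
          have m1 : Measurable fun x => ENNReal.ofReal ((w (m, n) x - A (m, n) x) ^ 2) :=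
            ((hwp.measurable.sub hAp).pow_const 2).ennreal_ofReal
          have m2 : Measurable fun x => (Metric.ball (0 : EuclideanSpace ℝ (Fin N)) R).indicator
            (fun x => ENNReal.ofReal (A (m, n) x ^ 2)) x :=
            ((hAp.pow_const 2).ennreal_ofReal).indicator measurableSet_ball
          rw [lintegral_add_left (m1.const_mul 2), lintegral_add_left (m2.const_mul 2),
            lintegral_const_mul _ m1, lintegral_const_mul _ m2,
            lintegral_const_mul' _ _ ENNReal.ofReal_ne_top, lintegral_indicator measurableSet_ball]
      _ ≤ 2 * (ENNReal.ofReal (δ ^ 2) * ENNReal.ofReal (4 * C)) +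
        (2 * ENNReal.ofReal (ε / 6) + ENNReal.ofReal ((R ^ 2)⁻¹) * ENNReal.ofReal (4 * C)) := by
          gcongr
          · exact (cs_approx _ (hws _) hδ).trans (by gcongr; exact hw1 _)
          · exact hw2 _
      _ = ENNReal.ofReal ε := by
          rw [← ENNReal.ofReal_ofNat 2, ← ENNReal.ofReal_mul (by positivity),
            ← ENNReal.ofReal_mul (by positivity), ← ENNReal.ofReal_mul (by positivity),
            ← ENNReal.ofReal_mul (by positivity), ← ENNReal.ofReal_add (by positivity) (by positivity),
            ← ENNReal.ofReal_add (by positivity) (by positivity)]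
          congr 1
          rw [hδe, hRe]
          field_simp
          norm_num
  rw [← ofReal_integral_eq_lintegral_ofReal (iw _)
      (Filter.Eventually.of_forall fun x => by positivity)] at hfin
  exact (ENNReal.ofReal_le_ofReal_iff hε.le).1 hfin

/-- Compactness of the embedding `H ↪ L`: every sequence of smooth compactly supported
functions bounded in the Gaussian-weighted `H¹` norm admits a subsequence which is Cauchy
in the Gaussian-weighted `L²` norm. -/
theorem gaussian_compact_embedding {N : ℕ} (hN : 1 ≤ N)
    (u : ℕ → EuclideanSpace ℝ (Fin N) → ℝ)
    (hsm : ∀ n, ContDiff ℝ (⊤ : ℕ∞) (u n)) (hsupp : ∀ n, HasCompactSupport (u n))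
    (M : ℝ)
    (hbdd : ∀ n, ∫ x, (‖gradient (u n) x‖ ^ 2 + (u n x) ^ 2) * Real.exp (-‖x‖ ^ 2 / 4) ≤ M) :
    ∃ φ : ℕ → ℕ, StrictMono φ ∧
      ∀ ε > (0 : ℝ), ∃ K : ℕ, ∀ m ≥ K, ∀ n ≥ K,
        ∫ x, (u (φ m) x - u (φ n) x) ^ 2 * Real.exp (-‖x‖ ^ 2 / 4) ≤ ε := by
  have hE := fun n => cs_energy (u n) (hsm n) (hsupp n) M (hbdd n) _ rfl
  obtain ⟨φ, hφ, h⟩ := cs_compact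
    (fun n x => u n x * Real.exp (-‖x‖ ^ 2 / 8))
    (max 1 (max M (max ((1 + N / 4) * M) (16 * ((1 + N / 4) * M))))) (le_max_left _ _)
    (fun n => (hE n).1) (fun n => (hE n).2.1)
    (fun n => (hE n).2.2.1.trans (by simp))
    (fun n => (hE n).2.2.2.1.trans (by simp))
    (fun n => (hE n).2.2.2.2.trans (by simp))
  refine ⟨φ, hφ, fun ε hε => ?_⟩
  obtain ⟨K, hK⟩ := h ε hε
  refine ⟨K, fun m hm n hn => le_of_eq_of_le ?_ (hK m hm n hn)⟩
  congr 1
  ext x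
  have hsq : Real.exp (-‖x‖ ^ 2 / 4) = Real.exp (-‖x‖ ^ 2 / 8) ^ 2 := by
    rw [← Real.exp_nat_mul]; congr 1; push_cast; ring
  rw [hsq]; ring
end
end

section
/- Let a ∈ L^∞(S^{N-1}) (N ≥ 3) and let μ_1(a) = inf over nonzero ψ ∈ H^1(S^{N-1}) of (∫_{S^{N-1}} |∇_{S^{N-1}}ψ|^2 dS − ∫_{S^{N-1}} a ψ^2 dS)/(∫_{S^{N-1}} ψ^2 dS). Then for every t > 0 and every smooth compactly supported u : R^N → R one has ∫_{R^N} (|∇u|^2 − (a(x/|x|)/|x|^2) u^2) G(x,t) dx + ((N-2)/(4t)) ∫_{R^N} u^2 G(x,t) dx ≥ (μ_1(a) + (N-2)^2/4) ∫_{R^N} (u^2/|x|^2) G(x,t) dx. -/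
open MeasureTheory Real Set Classical

noncomputable section

/-- The heat kernel `G(x,t) = t^{-N/2} exp(-|x|^2/(4t))`. -/
noncomputable def heatKernel (N : ℕ) (x : EuclideanSpace ℝ (Fin N)) (t : ℝ) : ℝ :=
  t ^ (-(N : ℝ) / 2) * Real.exp (-‖x‖ ^ 2 / (4 * t))

/-- Angular extension: `a(x/|x|)` for a function `a` on the unit sphere. -/
noncomputable def angularExt {N : ℕ}
    (a : Metric.sphere (0 : EuclideanSpace ℝ (Fin N)) 1 → ℝ)
    (x : EuclideanSpace ℝ (Fin N)) : ℝ :=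
  if hx : x = 0 then 0
  else a ⟨‖x‖⁻¹ • x, mem_sphere_zero_iff_norm.mpr (norm_smul_inv_norm hx)⟩

lemma polar_integral {n : ℕ} (F : EuclideanSpace ℝ (Fin (n + 3)) → ℝ) :
    ∫ x, F x = ∫ p : Metric.sphere (0 : EuclideanSpace ℝ (Fin (n + 3))) 1 × ℝ,
      p.2 ^ (n + 2) * F (p.2 • (p.1 : EuclideanSpace ℝ (Fin (n + 3))))
      ∂((volume : Measure (EuclideanSpace ℝ (Fin (n + 3)))).toSphere.prod
        (volume.restrict (Ioi (0 : ℝ)))) := by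
  let E := EuclideanSpace ℝ (Fin (n + 3))
  let σ := (volume : Measure E).toSphere
  have hd : Module.finrank ℝ E - 1 = n + 2 := by simp [E]
  have h1 : ∫ x, F x = ∫ x : ({(0 : E)}ᶜ : Set E), F x ∂((volume : Measure E).comap (↑)) := by
    rw [integral_subtype_comap (measurableSet_singleton _).compl fun x ↦ F x,
        restrict_compl_singleton]
  have h2 : ∫ x : ({(0 : E)}ᶜ : Set E), F x ∂((volume : Measure E).comap (↑))
      = ∫ p : Metric.sphere (0 : E) 1 × Ioi (0 : ℝ), F ((p.2 : ℝ) • (p.1 : E))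
        ∂(σ.prod (Measure.volumeIoiPow (n + 2))) := by
    have := (volume : Measure E).measurePreserving_homeomorphUnitSphereProd.integral_comp
        (Homeomorph.measurableEmbedding _)
        (fun p : Metric.sphere (0 : E) 1 × Ioi (0 : ℝ) => F ((p.2 : ℝ) • (p.1 : E)))
    rw [hd] at this
    rw [← this]
    refine integral_congr_ae (.of_forall fun x => ?_)
    have hx : ‖(x : E)‖ ≠ 0 := norm_ne_zero_iff.2 x.2
    have : (‖(x : E)‖ • (‖(x : E)‖⁻¹ • (x : E))) = x := by
      rw [smul_smul, mul_inv_cancel₀ hx, one_smul]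
    simp [this]
  have hsf : SFinite (Measure.comap (Subtype.val : Ioi (0:ℝ) → ℝ) volume) := by
    have h := (inferInstance : SigmaFinite (Measure.volumeIoiPow 0))
    simp only [Measure.volumeIoiPow, pow_zero, ENNReal.ofReal_one] at h
    have h1 : (fun _ : Ioi (0:ℝ) => (1 : ENNReal)) = 1 := rfl
    rw [h1, withDensity_one] at h
    infer_instance
  have h3 : MeasurePreserving (Prod.map id Subtype.val :
      Metric.sphere (0 : E) 1 × Ioi (0 : ℝ) → Metric.sphere (0 : E) 1 × ℝ)
      (σ.prod (Measure.comap Subtype.val volume)) (σ.prod (volume.restrict (Ioi 0))) := by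
    refine (MeasurePreserving.id σ).prod ⟨measurable_subtype_coe, ?_⟩
    exact map_comap_subtype_coe measurableSet_Ioi _
  have hemb : MeasurableEmbedding (Prod.map id Subtype.val :
      Metric.sphere (0 : E) 1 × Ioi (0 : ℝ) → Metric.sphere (0 : E) 1 × ℝ) :=
    MeasurableEmbedding.id.prodMap (MeasurableEmbedding.subtype_coe measurableSet_Ioi)
  rw [h1, h2, ← h3.integral_comp hemb, Measure.volumeIoiPow, prod_withDensity_right]
  · simp only [ENNReal.ofReal]
    rw [integral_withDensity_eq_integral_smul]
    · refine integral_congr_ae (.of_forall fun p => ?_)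
      have hp : 0 < (p.2 : ℝ) := p.2.2
      simp only [NNReal.smul_def, Prod.map_snd, Prod.map_fst, id, smul_eq_mul]
      rw [Real.coe_toNNReal _ (by positivity)]
    · fun_prop
  · fun_prop

lemma integrable_polar {n : ℕ} (H : Metric.sphere (0 : EuclideanSpace ℝ (Fin (n + 3))) 1 × ℝ → ℝ)
    (hH : Continuous H) (R : ℝ) (hR : ∀ θ r, R < r → H (θ, r) = 0) :
    Integrable H ((volume : Measure (EuclideanSpace ℝ (Fin (n + 3)))).toSphere.prod
        (volume.restrict (Ioi (0 : ℝ)))) := by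
  set σ := (volume : Measure (EuclideanSpace ℝ (Fin (n + 3)))).toSphere
  have h1 : σ.prod (volume.restrict (Ioi (0 : ℝ))) =
      (σ.prod volume).restrict (univ ×ˢ Ioi (0:ℝ)) := by
    rw [← Measure.prod_restrict, Measure.restrict_univ]
  rw [h1]
  have h2 : IntegrableOn H (univ ×ˢ Icc (0:ℝ) R) (σ.prod volume) :=
    hH.continuousOn.integrableOn_compact (isCompact_univ.prod isCompact_Icc)
  refine IntegrableOn.of_forall_sdiff_eq_zero h2 (MeasurableSet.univ.prod measurableSet_Ioi) ?_
  rintro ⟨θ, r⟩ ⟨⟨-, h⟩, h'⟩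
  apply hR
  by_contra hc
  exact h' ⟨trivial, le_of_lt h, not_lt.1 hc⟩

lemma hasGradientAt_radial {E : Type*} [NormedAddCommGroup E] [InnerProductSpace ℝ E]
    [CompleteSpace E] (u : E → ℝ) (hu : Differentiable ℝ u) (r : ℝ) (θ : E) (hθ : ‖θ‖ = 1) :
    HasGradientAt (fun x => u (r • (‖x‖⁻¹ • x)))
      (r • (gradient u (r • θ) - (inner ℝ (gradient u (r • θ)) θ) • θ)) θ := by
  have hne : θ ≠ 0 := by rintro rfl; simp at hθ
  have hnorm : HasFDerivAt (fun x : E => ‖x‖) (innerSL ℝ θ) θ := by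
    have h := (hasStrictFDerivAt_norm_sq θ).hasFDerivAt.sqrt (by simp [hne])
    have h' : HasFDerivAt (fun x : E => √(‖x‖ ^ 2)) (innerSL ℝ θ) θ := by
      convert h using 1
      ext v
      simp [hθ]
    simpa [Real.sqrt_sq (norm_nonneg _)] using h'
  have hinv : HasFDerivAt (fun x : E => ‖x‖⁻¹) (-(innerSL ℝ θ)) θ := by
    have := (hasDerivAt_inv (x := ‖θ‖) (by simp [hθ])).comp_hasFDerivAt θ hnorm
    simpa [hθ, Function.comp_def] using this
  have hq := (hinv.smul (hasFDerivAt_id θ)).const_smul r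
  have hu' : HasFDerivAt u (InnerProductSpace.toDual ℝ E (gradient u (r • θ)))
      (r • (‖θ‖⁻¹ • θ)) := by
    have := (hu (r • θ)).hasGradientAt.hasFDerivAt
    simpa [hθ] using this
  rw [hasGradientAt_iff_hasFDerivAt]
  have := HasFDerivAt.comp θ hu' hq
  refine this.congr_fderiv (ContinuousLinearMap.ext fun v => ?_)
  simp [hθ]
  ring

lemma radial_hardy {n : ℕ} {t : ℝ} (ht : 0 < t) (f f' : ℝ → ℝ)
    (hf : ∀ r, HasDerivAt f (f' r) r) (hf' : Continuous f') (R : ℝ)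
    (hR : ∀ r, R < r → f r = 0) :
    0 ≤ ∫ r in Ioi (0 : ℝ), Real.exp (-r ^ 2 / (4 * t)) *
      (r ^ (n + 2) * f' r ^ 2 + ((n : ℝ) + 1) / (4 * t) * (r ^ (n + 2) * f r ^ 2)
        - ((n : ℝ) + 1) ^ 2 / 4 * (r ^ n * f r ^ 2)) := by
  have hfc : Continuous f := continuous_iff_continuousAt.2 fun r => (hf r).continuousAt
  have hR' : ∀ r, R < r → f' r = 0 := fun r hr => by
    have : f =ᶠ[nhds r] fun _ => 0 := by
      filter_upwards [lt_mem_nhds hr] with s hs using hR s hs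
    exact (hf r).unique ((hasDerivAt_const r (0:ℝ)).congr_of_eventuallyEq this)
  have hInteg : ∀ g : ℝ → ℝ, Continuous g → (∀ r, R < r → g r = 0) → IntegrableOn g (Ioi 0) := by
    intro g hg h0
    refine IntegrableOn.of_forall_sdiff_eq_zero
      (hg.continuousOn.integrableOn_compact (isCompact_Icc (a := 0) (b := R))) measurableSet_Ioi ?_
    rintro r ⟨h, h'⟩
    apply h0
    by_contra hc
    exact h' ⟨le_of_lt h, not_lt.1 hc⟩
  set k : ℝ := ((n : ℝ) + 1) / 2 with hk
  set H' : ℝ → ℝ := fun r => k * Real.exp (-r ^ 2 / (4 * t)) *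
    (2 * r ^ (n + 1) * f r * f' r + (n + 1) * r ^ n * f r ^ 2 - r ^ (n + 2) / (2 * t) * f r ^ 2)
    with hH'
  have hH : ∀ r, HasDerivAt (fun r => k * (Real.exp (-r ^ 2 / (4 * t)) *
      (r ^ (n + 1) * f r ^ 2))) (H' r) r := by
    intro r
    have h1 : HasDerivAt (fun r : ℝ => Real.exp (-r ^ 2 / (4 * t)))
        (Real.exp (-r ^ 2 / (4 * t)) * (-(2 * r) / (4 * t))) r := by
      have := (((hasDerivAt_pow 2 r).neg).div_const (4 * t)).exp
      simpa using this
    have h2 := (h1.mul ((hasDerivAt_pow (n + 1) r).mul ((hf r).pow 2))).const_mul k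
    refine HasDerivAt.congr_deriv h2 ?_
    simp [hH']
    field_simp
    ring
  have hH'c : Continuous H' := by
    simp only [hH']
    fun_prop
  have hH'0 : ∀ r, R < r → H' r = 0 := fun r hr => by simp [hH', hR r hr]
  have hI : ∫ r in Ioi (0 : ℝ), H' r = 0 := by
    rw [integral_Ioi_of_hasDerivAt_of_tendsto' (m := 0) (fun x _ => hH x) (hInteg H' hH'c hH'0)]
    · simp
    · refine tendsto_const_nhds.congr' ?_
      filter_upwards [Filter.eventually_gt_atTop R] with r hr
      simp [hR r hr]
  refine le_of_le_of_eq ?_ (add_zero _)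
  nth_rewrite 3 [← hI]
  rw [← integral_add]
  · refine setIntegral_nonneg measurableSet_Ioi fun r hr => ?_
    have hr : 0 < r := hr
    have : Real.exp (-r ^ 2 / (4 * t)) *
      (r ^ (n + 2) * f' r ^ 2 + ((n : ℝ) + 1) / (4 * t) * (r ^ (n + 2) * f r ^ 2)
        - ((n : ℝ) + 1) ^ 2 / 4 * (r ^ n * f r ^ 2)) + H' r
        = Real.exp (-r ^ 2 / (4 * t)) * r ^ n * (r * f' r + k * f r) ^ 2 := by
      simp only [hH', hk]
      field_simp
      ring
    rw [this]
    positivity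
  · refine hInteg _ (by fun_prop) fun r hr => by simp [hR r hr, hR' r hr]
  · exact hInteg H' hH'c hH'0

lemma integrable_sub_fun {α : Type*} [MeasurableSpace α] {μ : Measure α} {f g : α → ℝ}
    (hf : Integrable f μ) (hg : Integrable g μ) : Integrable (fun x => f x - g x) μ := hf.sub hg

lemma integrable_add_fun {α : Type*} [MeasurableSpace α] {μ : Measure α} {f g : α → ℝ}
    (hf : Integrable f μ) (hg : Integrable g μ) : Integrable (fun x => f x + g x) μ := hf.add hg

lemma sphere_ineq {N : ℕ}
    (a : Metric.sphere (0 : EuclideanSpace ℝ (Fin N)) 1 → ℝ)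
    (ha_meas : Measurable a) (C : ℝ) (hC : ∀ θ, |a θ| ≤ C) (hC0 : 0 ≤ C)
    (μ₁ : ℝ)
    (hμ₁ : μ₁ = sInf { R : ℝ | ∃ ψ : EuclideanSpace ℝ (Fin N) → ℝ,
        ContDiffOn ℝ (⊤ : ℕ∞) ψ {(0 : EuclideanSpace ℝ (Fin N))}ᶜ ∧
        (∀ c > (0 : ℝ), ∀ x, ψ (c • x) = ψ x) ∧
        (∫ θ : Metric.sphere (0 : EuclideanSpace ℝ (Fin N)) 1, (ψ θ) ^ 2
          ∂(volume : Measure (EuclideanSpace ℝ (Fin N))).toSphere) ≠ 0 ∧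
        R = (∫ θ : Metric.sphere (0 : EuclideanSpace ℝ (Fin N)) 1,
              (‖gradient ψ (θ : EuclideanSpace ℝ (Fin N))‖ ^ 2 - a θ * (ψ θ) ^ 2)
              ∂(volume : Measure (EuclideanSpace ℝ (Fin N))).toSphere) /
            ∫ θ : Metric.sphere (0 : EuclideanSpace ℝ (Fin N)) 1, (ψ θ) ^ 2
              ∂(volume : Measure (EuclideanSpace ℝ (Fin N))).toSphere })
    (u : EuclideanSpace ℝ (Fin N) → ℝ) (hu : ContDiff ℝ (⊤ : ℕ∞) u)
    (hgc : Continuous (gradient u)) (r : ℝ) :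
    0 ≤ ∫ θ : Metric.sphere (0 : EuclideanSpace ℝ (Fin N)) 1,
      (r ^ 2 * (‖gradient u (r • (θ : EuclideanSpace ℝ (Fin N)))‖ ^ 2
        - (inner ℝ (gradient u (r • (θ : EuclideanSpace ℝ (Fin N))))
            (θ : EuclideanSpace ℝ (Fin N))) ^ 2)
        - a θ * u (r • (θ : EuclideanSpace ℝ (Fin N))) ^ 2
        - μ₁ * u (r • (θ : EuclideanSpace ℝ (Fin N))) ^ 2)
      ∂(volume : Measure (EuclideanSpace ℝ (Fin N))).toSphere := by
  set σ := (volume : Measure (EuclideanSpace ℝ (Fin N))).toSphere with hσ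
  have huc := hu.continuous
  have hInteg : ∀ g : Metric.sphere (0 : EuclideanSpace ℝ (Fin N)) 1 → ℝ, Continuous g →
      Integrable g σ := fun g hg =>
    hg.integrable_of_hasCompactSupport (HasCompactSupport.of_compactSpace g)
  have iu : Integrable (fun θ : Metric.sphere (0 : EuclideanSpace ℝ (Fin N)) 1 =>
      u (r • (θ : EuclideanSpace ℝ (Fin N))) ^ 2) σ := hInteg _ (by fun_prop)
  have ia : Integrable (fun θ : Metric.sphere (0 : EuclideanSpace ℝ (Fin N)) 1 =>
      a θ * u (r • (θ : EuclideanSpace ℝ (Fin N))) ^ 2) σ :=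
    iu.bdd_mul (c := C) ha_meas.aestronglyMeasurable (.of_forall fun θ => hC θ)
  have ig : Integrable (fun θ : Metric.sphere (0 : EuclideanSpace ℝ (Fin N)) 1 =>
      r ^ 2 * (‖gradient u (r • (θ : EuclideanSpace ℝ (Fin N)))‖ ^ 2
        - (inner ℝ (gradient u (r • (θ : EuclideanSpace ℝ (Fin N))))
            (θ : EuclideanSpace ℝ (Fin N))) ^ 2)) σ := hInteg _ (by fun_prop)
  rw [integral_sub (integrable_sub_fun ig ia) (iu.const_mul _), integral_const_mul]
  by_cases h0 : ∫ θ : Metric.sphere (0 : EuclideanSpace ℝ (Fin N)) 1,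
      u (r • (θ : EuclideanSpace ℝ (Fin N))) ^ 2 ∂σ = 0
  · rw [h0, mul_zero, sub_zero]
    have h1 : 0 ≤ ∫ θ : Metric.sphere (0 : EuclideanSpace ℝ (Fin N)) 1,
      ((r ^ 2 * (‖gradient u (r • (θ : EuclideanSpace ℝ (Fin N)))‖ ^ 2
        - (inner ℝ (gradient u (r • (θ : EuclideanSpace ℝ (Fin N))))
            (θ : EuclideanSpace ℝ (Fin N))) ^ 2)
        - a θ * u (r • (θ : EuclideanSpace ℝ (Fin N))) ^ 2)
        + C * u (r • (θ : EuclideanSpace ℝ (Fin N))) ^ 2) ∂σ := by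
      refine integral_nonneg fun θ => ?_
      have hcs := abs_real_inner_le_norm (gradient u (r • (θ : EuclideanSpace ℝ (Fin N))))
            (θ : EuclideanSpace ℝ (Fin N))
      have hθ : ‖(θ : EuclideanSpace ℝ (Fin N))‖ = 1 := by simp
      rw [hθ, mul_one] at hcs
      have h3 := sq_le_sq' (abs_le.1 hcs).1 (abs_le.1 hcs).2
      have h4 := (abs_le.1 (hC θ)).2
      have h5 := mul_nonneg (sq_nonneg r) (sub_nonneg.2 h3)
      have h6 := mul_nonneg (sub_nonneg.2 h4) (sq_nonneg (u (r • (θ : EuclideanSpace ℝ (Fin N)))))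
      simp only [Pi.zero_apply]
      linarith
    rw [integral_add (integrable_sub_fun ig ia) (iu.const_mul _), integral_const_mul, h0] at h1
    simpa using h1
  · have hpos : 0 < ∫ θ : Metric.sphere (0 : EuclideanSpace ℝ (Fin N)) 1,
      u (r • (θ : EuclideanSpace ℝ (Fin N))) ^ 2 ∂σ :=
      lt_of_le_of_ne (integral_nonneg fun θ => sq_nonneg _) (Ne.symm h0)
    rw [sub_nonneg, ← le_div_iff₀ hpos, hμ₁]
    refine csInf_le ⟨-C, ?_⟩ ⟨fun x => u (r • (‖x‖⁻¹ • x)), ?_, ?_, ?_, ?_⟩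
    · rintro _ ⟨ψ, -, -, hne, rfl⟩
      have hψi : Integrable (fun θ : Metric.sphere (0 : EuclideanSpace ℝ (Fin N)) 1 =>
        ψ θ ^ 2) σ := by
        by_contra hc
        exact hne (integral_undef hc)
      have hψ : 0 < ∫ θ : Metric.sphere (0 : EuclideanSpace ℝ (Fin N)) 1, ψ θ ^ 2 ∂σ :=
        lt_of_le_of_ne (integral_nonneg fun θ => sq_nonneg _) (Ne.symm hne)
      rw [le_div_iff₀ hψ]
      by_cases hi : Integrable (fun θ : Metric.sphere (0 : EuclideanSpace ℝ (Fin N)) 1 =>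
        (‖gradient ψ (θ : EuclideanSpace ℝ (Fin N))‖ ^ 2 - a θ * (ψ θ) ^ 2)) σ
      · rw [← integral_const_mul]
        refine integral_mono (hψi.const_mul _) hi fun θ => ?_
        have h4 := (abs_le.1 (hC θ)).2
        have h6 := mul_nonneg (sub_nonneg.2 h4) (sq_nonneg (ψ θ))
        have h7 := sq_nonneg ‖gradient ψ (θ : EuclideanSpace ℝ (Fin N))‖
        simp only
        linarith
      · rw [integral_undef hi]
        have := mul_nonneg hC0 hψ.le
        linarith
    · intro x hx
      have hx : x ≠ 0 := hx
      refine ContDiffAt.contDiffWithinAt ?_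
      refine hu.contDiffAt.comp x ?_
      have h1 : ContDiffAt ℝ (⊤ : ℕ∞) (fun x : EuclideanSpace ℝ (Fin N) => ‖x‖⁻¹ • x) x :=
        ((contDiffAt_norm ℝ hx).inv (norm_ne_zero_iff.2 hx)).smul contDiffAt_id
      exact h1.const_smul r
    · intro c hc x
      simp only [norm_smul, Real.norm_eq_abs, abs_of_pos hc, smul_smul, mul_inv]
      congr 2
      field_simp
    · simpa using h0
    · have e2 : ∀ θ : Metric.sphere (0 : EuclideanSpace ℝ (Fin N)) 1,
          ‖gradient (fun x => u (r • (‖x‖⁻¹ • x))) (θ : EuclideanSpace ℝ (Fin N))‖ ^ 2 =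
          r ^ 2 * (‖gradient u (r • (θ : EuclideanSpace ℝ (Fin N)))‖ ^ 2
            - (inner ℝ (gradient u (r • (θ : EuclideanSpace ℝ (Fin N))))
            (θ : EuclideanSpace ℝ (Fin N))) ^ 2) := by
        intro θ
        have hθ : ‖(θ : EuclideanSpace ℝ (Fin N))‖ = 1 := by simp
        rw [(hasGradientAt_radial u (hu.differentiable (by simp)) r θ hθ).gradient, norm_smul,
          mul_pow, Real.norm_eq_abs, sq_abs, norm_sub_sq_real, inner_smul_right, norm_smul, hθ,
          mul_one, Real.norm_eq_abs, sq_abs]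
        ring
      simp only [e2]
      simp

/-- Anisotropic parabolic Hardy inequality.  Here `μ₁` is the first eigenvalue of
`-Δ_{S^{N-1}} - a`, characterized variationally as the infimum of the Rayleigh quotients
of zero-homogeneous test functions (whose full gradient on the sphere coincides with the
tangential gradient), the sphere carrying the surface measure `volume.toSphere`. -/
theorem anisotropic_parabolic_hardy {N : ℕ} (hN : 3 ≤ N)
    (a : Metric.sphere (0 : EuclideanSpace ℝ (Fin N)) 1 → ℝ)
    (ha_meas : Measurable a) (ha_bdd : ∃ C : ℝ, ∀ θ, |a θ| ≤ C)
    (μ₁ : ℝ)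
    (hμ₁ : μ₁ = sInf { R : ℝ | ∃ ψ : EuclideanSpace ℝ (Fin N) → ℝ,
        ContDiffOn ℝ (⊤ : ℕ∞) ψ {(0 : EuclideanSpace ℝ (Fin N))}ᶜ ∧
        (∀ c > (0 : ℝ), ∀ x, ψ (c • x) = ψ x) ∧
        (∫ θ : Metric.sphere (0 : EuclideanSpace ℝ (Fin N)) 1, (ψ θ) ^ 2
          ∂(volume : Measure (EuclideanSpace ℝ (Fin N))).toSphere) ≠ 0 ∧
        R = (∫ θ : Metric.sphere (0 : EuclideanSpace ℝ (Fin N)) 1,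
              (‖gradient ψ (θ : EuclideanSpace ℝ (Fin N))‖ ^ 2 - a θ * (ψ θ) ^ 2)
              ∂(volume : Measure (EuclideanSpace ℝ (Fin N))).toSphere) /
            ∫ θ : Metric.sphere (0 : EuclideanSpace ℝ (Fin N)) 1, (ψ θ) ^ 2
              ∂(volume : Measure (EuclideanSpace ℝ (Fin N))).toSphere })
    (t : ℝ) (ht : 0 < t)
    (u : EuclideanSpace ℝ (Fin N) → ℝ) (hu : ContDiff ℝ (⊤ : ℕ∞) u)
    (hsupp : HasCompactSupport u) :
    (∫ x, (‖gradient u x‖ ^ 2 - angularExt a x / ‖x‖ ^ 2 * (u x) ^ 2) * heatKernel N x t)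
      + (((N : ℝ) - 2) / (4 * t)) * ∫ x, (u x) ^ 2 * heatKernel N x t ≥
      (μ₁ + ((N : ℝ) - 2) ^ 2 / 4) * ∫ x, (u x) ^ 2 / ‖x‖ ^ 2 * heatKernel N x t := by
  obtain ⟨C, hC⟩ := ha_bdd
  obtain ⟨n, rfl⟩ : ∃ n, N = n + 3 := ⟨N - 3, by omega⟩
  have hC0 : 0 ≤ C :=
    (abs_nonneg _).trans (hC ⟨EuclideanSpace.single 0 1, by simp⟩)
  have huc := hu.continuous
  have hdiff : Differentiable ℝ u := hu.differentiable (by simp)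
  have hgc : Continuous (gradient u) := by
    unfold gradient
    exact (InnerProductSpace.toDual ℝ _).symm.continuous.comp (hu.continuous_fderiv (by simp))
  obtain ⟨R, hR⟩ := hsupp.isCompact.isBounded.subset_closedBall (0 : EuclideanSpace ℝ (Fin (n + 3)))
  have hu0 : ∀ x, R < ‖x‖ → u x = 0 := fun x hx => by
    by_contra hc
    have := hR (subset_tsupport u hc)
    rw [mem_closedBall_zero_iff] at this
    linarith
  have hg0 : ∀ x, R < ‖x‖ → gradient u x = 0 := fun x hx => by
    have : u =ᶠ[nhds x] fun _ => 0 := by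
      filter_upwards [continuous_norm.continuousAt.eventually (lt_mem_nhds hx)] with y hy
        using hu0 y hy
    have h := this.fderiv_eq (𝕜 := ℝ)
    simp [gradient, h]
  let S := Metric.sphere (0 : EuclideanSpace ℝ (Fin (n + 3))) 1
  let σ := (volume : Measure (EuclideanSpace ℝ (Fin (n + 3)))).toSphere
  let ρ : Measure (S × ℝ) := σ.prod (volume.restrict (Ioi (0 : ℝ)))
  have hnorm : ∀ (θ : S) (r : ℝ), max R 0 < r → R < ‖r • (θ : EuclideanSpace ℝ (Fin (n + 3)))‖ := by
    intro θ r hr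
    have h1 : ‖(θ : EuclideanSpace ℝ (Fin (n + 3)))‖ = 1 := mem_sphere_zero_iff_norm.1 θ.2
    rw [norm_smul, h1, mul_one, Real.norm_eq_abs]
    exact ((le_max_left _ _).trans_lt hr).trans_le (le_abs_self r)
  let c : ℝ := t ^ (-((n + 3 : ℕ) : ℝ) / 2)
  have hc : 0 < c := Real.rpow_pos_of_pos ht _
  let g : ℝ → ℝ := fun r => c * Real.exp (-r ^ 2 / (4 * t))
  have hgcont : Continuous g := by fun_prop
  have hgpos : ∀ r, 0 < g r := fun r => by positivity
  let U : S × ℝ → ℝ := fun p => u (p.2 • (p.1 : EuclideanSpace ℝ (Fin (n + 3))))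
  let W : S × ℝ → EuclideanSpace ℝ (Fin (n + 3)) :=
    fun p => gradient u (p.2 • (p.1 : EuclideanSpace ℝ (Fin (n + 3))))
  let D : S × ℝ → ℝ := fun p => inner ℝ (W p) (p.1 : EuclideanSpace ℝ (Fin (n + 3)))
  have hUc : Continuous U := by fun_prop
  have hWc : Continuous W := by fun_prop
  have hDc : Continuous D := by fun_prop
  have hU0 : ∀ (θ : S) (r : ℝ), max R 0 < r → U (θ, r) = 0 := fun θ r hr => hu0 _ (hnorm θ r hr)
  have hW0 : ∀ (θ : S) (r : ℝ), max R 0 < r → W (θ, r) = 0 := fun θ r hr => hg0 _ (hnorm θ r hr)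
  have hD0 : ∀ (θ : S) (r : ℝ), max R 0 < r → D (θ, r) = 0 := fun θ r hr => by
    simp [D, hW0 θ r hr]
  -- integrability of the basic pieces
  have iW : Integrable (fun p => g p.2 * (p.2 ^ (n + 2) * ‖W p‖ ^ 2)) ρ :=
    integrable_polar _ (by fun_prop) (max R 0) fun θ r hr => by simp [hW0 θ r hr]
  have iD : Integrable (fun p => g p.2 * (p.2 ^ (n + 2) * D p ^ 2)) ρ :=
    integrable_polar _ (by fun_prop) (max R 0) fun θ r hr => by simp [hD0 θ r hr]
  have iU : Integrable (fun p => g p.2 * (p.2 ^ (n + 2) * U p ^ 2)) ρ :=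
    integrable_polar _ (by fun_prop) (max R 0) fun θ r hr => by simp [hU0 θ r hr]
  have iV : Integrable (fun p => g p.2 * (p.2 ^ n * U p ^ 2)) ρ :=
    integrable_polar _ (by fun_prop) (max R 0) fun θ r hr => by simp [hU0 θ r hr]
  have iA : Integrable (fun p => a p.1 * (g p.2 * (p.2 ^ n * U p ^ 2))) ρ :=
    iV.bdd_mul (c := C) (ha_meas.comp measurable_fst).aestronglyMeasurable
      (.of_forall fun p => hC p.1)
  have iWD := integrable_sub_fun iW iD
  have iWDA := integrable_sub_fun iWD iA
  have iDU := integrable_add_fun iD (iU.const_mul (((n : ℝ) + 1) / (4 * t)))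
  have hpos : ∀ᵐ p ∂ρ, 0 < p.2 := by
    have h : ∀ᵐ r ∂(volume.restrict (Ioi (0 : ℝ))), 0 < r := ae_restrict_mem measurableSet_Ioi
    exact Measure.quasiMeasurePreserving_snd.ae h
  have hn1 : ∀ p : S × ℝ, 0 < p.2 → ‖p.2 • (p.1 : EuclideanSpace ℝ (Fin (n + 3)))‖ = p.2 := by
    intro p hp
    have h1 : ‖(p.1 : EuclideanSpace ℝ (Fin (n + 3)))‖ = 1 := mem_sphere_zero_iff_norm.1 p.1.2
    rw [norm_smul, h1, mul_one, Real.norm_eq_abs, abs_of_pos hp]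
  have hang : ∀ p : S × ℝ, 0 < p.2 →
      angularExt a (p.2 • (p.1 : EuclideanSpace ℝ (Fin (n + 3)))) = a p.1 := by
    intro p hp
    have hne : p.2 • (p.1 : EuclideanSpace ℝ (Fin (n + 3))) ≠ 0 := by
      rw [← norm_ne_zero_iff, hn1 p hp]; exact hp.ne'
    rw [angularExt, dif_neg hne]
    congr 1
    apply Subtype.ext
    simp only [hn1 p hp, smul_smul, inv_mul_cancel₀ hp.ne', one_smul]
  -- rewrite the three integrals in polar coordinates
  have e1 : (∫ x, (‖gradient u x‖ ^ 2 - angularExt a x / ‖x‖ ^ 2 * (u x) ^ 2) *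
      heatKernel (n + 3) x t) = (∫ p, g p.2 * (p.2 ^ (n + 2) * ‖W p‖ ^ 2) ∂ρ)
        - ∫ p, a p.1 * (g p.2 * (p.2 ^ n * U p ^ 2)) ∂ρ := by
    rw [polar_integral, ← integral_sub iW iA]
    refine integral_congr_ae ?_
    filter_upwards [hpos] with p hp
    have hp : 0 < p.2 := hp
    simp only [heatKernel, hn1 p hp, hang p hp, W, U, g, c]
    field_simp
    ring
  have e2 : ∫ x, (u x) ^ 2 * heatKernel (n + 3) x t
      = ∫ p, g p.2 * (p.2 ^ (n + 2) * U p ^ 2) ∂ρ := by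
    rw [polar_integral]
    refine integral_congr_ae ?_
    filter_upwards [hpos] with p hp
    have hp : 0 < p.2 := hp
    simp only [heatKernel, hn1 p hp, U, g, c]
    ring
  have e3 : ∫ x, (u x) ^ 2 / ‖x‖ ^ 2 * heatKernel (n + 3) x t
      = ∫ p, g p.2 * (p.2 ^ n * U p ^ 2) ∂ρ := by
    rw [polar_integral]
    refine integral_congr_ae ?_
    filter_upwards [hpos] with p hp
    have hp : 0 < p.2 := hp
    simp only [heatKernel, hn1 p hp, U, g, c]
    field_simp
    ring
  -- angular part
  have A1 : 0 ≤ ∫ p, (g p.2 * (p.2 ^ (n + 2) * ‖W p‖ ^ 2) - g p.2 * (p.2 ^ (n + 2) * D p ^ 2)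
      - a p.1 * (g p.2 * (p.2 ^ n * U p ^ 2)) - μ₁ * (g p.2 * (p.2 ^ n * U p ^ 2))) ∂ρ := by
    refine le_of_le_of_eq ?_ (integral_prod_symm _ (integrable_sub_fun iWDA (iV.const_mul μ₁))).symm
    refine setIntegral_nonneg measurableSet_Ioi fun r hr => ?_
    have hr : 0 < r := hr
    have h := sphere_ineq a ha_meas C hC hC0 μ₁ hμ₁ u hu hgc r
    have h' := mul_nonneg (mul_nonneg (hgpos r).le (pow_nonneg hr.le n)) h
    rw [← integral_const_mul] at h'
    refine h'.trans_eq (integral_congr_ae (.of_forall fun θ => ?_))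
    simp only [W, U, D]
    ring
  -- radial part
  have A2 : 0 ≤ ∫ p, (g p.2 * (p.2 ^ (n + 2) * D p ^ 2)
      + ((n : ℝ) + 1) / (4 * t) * (g p.2 * (p.2 ^ (n + 2) * U p ^ 2))
      - ((n : ℝ) + 1) ^ 2 / 4 * (g p.2 * (p.2 ^ n * U p ^ 2))) ∂ρ := by
    refine le_of_le_of_eq ?_ (integral_prod _ (integrable_sub_fun iDU (iV.const_mul _))).symm
    refine integral_nonneg fun θ => ?_
    have hder : ∀ r, HasDerivAt (fun r => U (θ, r)) (D (θ, r)) r := by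
      intro r
      have h1 : HasDerivAt (fun r : ℝ => r • (θ : EuclideanSpace ℝ (Fin (n + 3))))
          ((1 : ℝ) • (θ : EuclideanSpace ℝ (Fin (n + 3)))) r := (hasDerivAt_id r).smul_const _
      have h2 := (hdiff (r • (θ : EuclideanSpace ℝ (Fin (n + 3))))).hasGradientAt.hasFDerivAt
      have h3 := h2.comp_hasDerivAt r h1
      simpa [Function.comp_def, U, D, W] using h3
    have h := radial_hardy (n := n) ht (fun r => U (θ, r)) (fun r => D (θ, r)) hder (by fun_prop)
      (max R 0) (fun r hr => hU0 θ r hr)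
    have h' := mul_nonneg hc.le h
    rw [← integral_const_mul] at h'
    refine h'.trans_eq (integral_congr_ae (.of_forall fun r => ?_))
    simp only [g]
    ring
  rw [integral_sub iWDA (iV.const_mul μ₁), integral_sub iWD iA,
    integral_sub iW iD, integral_const_mul] at A1
  rw [integral_sub iDU (iV.const_mul _), integral_add iD (iU.const_mul _),
    integral_const_mul, integral_const_mul] at A2
  rw [e1, e2, e3]
  have hcast : (((n + 3 : ℕ) : ℝ) - 2) = (n : ℝ) + 1 := by push_cast; ring
  rw [hcast]
  linarith
end
end
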